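/- Let W : ℝ → ℂ be a smooth function with compact support contained in [1, 2]. For every nonnegative integer B and every δ > 0 there exists a constant C > 0 (depending on W, B, δ) such that for every prime q, every real M with 1 ≤ M ≤ q^{1/2+δ}, and every nonzero integer m, |∫_ℝ V₁(yM/√q) · W(y) · e(−mMy/q) dy| ≤ C · (q^{1+δ}/(|m|·M))^B. -/

import Mathlib

open Complex

/-- The weight function `V₁` from the approximate functional equation for `L(1/2, χ)`:
`V₁(x) = (1/2πi) ∫_(1) (√π x)^{-s} Γ((2s+1)/4)/Γ(1/4) ds/s`, the integral taken
along the vertical line `Re s = 1`. -/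
noncomputable def V₁ (x : ℝ) : ℂ :=
  (1 / (2 * Real.pi)) * ∫ t : ℝ,
    (((Real.sqrt Real.pi * x : ℝ) : ℂ) ^ (-(1 + t * I))) *
      (Complex.Gamma ((2 * (1 + t * I) + 1) / 4) / Complex.Gamma (1 / 4)) *
      (1 + t * I)⁻¹

/-!
For `x > 0`, Mellin inversion identifies `V₁ x` with a constant multiple of the tail
`∫_x^∞ u^(-1/2) e^(-π u²) du`. Hence all `x ^ k V₁⁽ᵏ⁾(x)` are bounded on `(0, ∞)`, and the
`B`-th derivative of `y ↦ V₁(X y) W(y)` is bounded uniformly in `X > 0`. For `X = M / √q` the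
integral is the Fourier transform of this function at `ξ = m M / q`, so it is
`≪ |ξ|^(-B) = (q / (|m| M))^B` uniformly in `X`.
-/

open Filter MeasureTheory Set
open scoped ContDiff FourierTransform Topology

section RpowGaussian

variable {a b c x : ℝ}

/-- The integrand `u ^ a exp (-b u²)` of the incomplete Gamma integral that represents `V₁`. It is
meant for positive arguments only: elsewhere `x ^ a` has the conventional values of `Real.rpow`. -/
noncomputable def rpowGaussian (b a x : ℝ) : ℝ := x ^ a * Real.exp (-b * x ^ 2)

/-- The upper tail of `rpowGaussian b a`, an incomplete Gamma function in the variable `b x²`. Up to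
a constant factor, `V₁` is the case `b = π`, `a = -1 / 2`. -/
noncomputable def rpowGaussianTail (b a x : ℝ) : ℝ := ∫ u in Ioi x, rpowGaussian b a u

theorem rpowGaussian_nonneg (hx : 0 ≤ x) : 0 ≤ rpowGaussian b a x :=
  mul_nonneg (Real.rpow_nonneg hx a) (Real.exp_pos _).le

theorem rpow_mul_rpowGaussian (hx : 0 < x) :
    x ^ c * rpowGaussian b a x = rpowGaussian b (c + a) x := by
  simp only [rpowGaussian, Real.rpow_add hx, mul_assoc]

theorem contDiffAt_rpowGaussian {n : ℕ∞ω} (hx : x ≠ 0) :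
    ContDiffAt ℝ n (rpowGaussian b a) x := by
  unfold rpowGaussian
  exact (Real.contDiffAt_rpow_const_of_ne hx).mul (by fun_prop)

theorem deriv_rpowGaussian (hx : 0 < x) :
    deriv (rpowGaussian b a) x =
      a * rpowGaussian b (a - 1) x - 2 * b * rpowGaussian b (a + 1) x := by
  have hexp : HasDerivAt (fun y => Real.exp (-b * y ^ 2))
      (Real.exp (-b * x ^ 2) * (-b * (2 * x))) x := by
    simpa using ((hasDerivAt_pow 2 x).const_mul (-b)).exp
  have hmul : HasDerivAt (rpowGaussian b a) _ x :=
    (Real.hasDerivAt_rpow_const (p := a) (Or.inl hx.ne')).mul hexp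
  rw [hmul.deriv]
  simp only [rpowGaussian, Real.rpow_add_one hx.ne']
  ring

theorem integrableOn_rpowGaussian (hb : 0 < b) (ha : -1 < a) :
    IntegrableOn (rpowGaussian b a) (Ioi 0) :=
  integrableOn_rpow_mul_exp_neg_mul_sq hb ha

theorem exists_abs_rpowGaussian_le (hb : 0 < b) (ha : 0 ≤ a) :
    ∃ K, ∀ x, 0 < x → |rpowGaussian b a x| ≤ K := by
  have hcont : Continuous fun x : ℝ => |x| ^ a * Real.exp (-b * x ^ 2) :=
    (continuous_abs.rpow_const fun _ => Or.inr ha).mul (by fun_prop)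
  have hlim := tendsto_rpow_abs_mul_exp_neg_mul_sq_cocompact hb a
  obtain ⟨K, hK⟩ := (ZeroAtInftyContinuousMap.isBounded_range
    (⟨⟨_, hcont⟩, hlim⟩ : ZeroAtInftyContinuousMap ℝ ℝ)).exists_norm_le
  refine ⟨K, fun x hx => ?_⟩
  have hKx : |(|x| ^ a * Real.exp (-b * x ^ 2))| ≤ K := hK _ ⟨x, rfl⟩
  rwa [abs_of_pos hx] at hKx

-- Each derivative lowers `a` by at most one, which raising `c` by one absorbs; this is why the
-- weight `x ^ c` is carried through the induction.
theorem exists_rpow_mul_abs_iteratedDeriv_rpowGaussian_le (hb : 0 < b) (n : ℕ) (h : 0 ≤ c + a) :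
    ∃ K, ∀ x, 0 < x → x ^ (c + n) * |iteratedDeriv n (rpowGaussian b a) x| ≤ K := by
  induction n generalizing a c with
  | zero =>
    obtain ⟨K, hK⟩ := exists_abs_rpowGaussian_le hb h
    refine ⟨K, fun x hx => ?_⟩
    rw [iteratedDeriv_zero, Nat.cast_zero, add_zero, ← abs_of_nonneg (Real.rpow_nonneg hx.le c),
      ← abs_mul, rpow_mul_rpowGaussian hx]
    exact hK x hx
  | succ n ih =>
    obtain ⟨K₁, hK₁⟩ := ih (a := a - 1) (c := c + 1) (by linarith)
    obtain ⟨K₂, hK₂⟩ := ih (a := a + 1) (c := c + 1) (by linarith)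
    refine ⟨|a| * K₁ + |2 * b| * K₂, fun x hx => ?_⟩
    have hderiv : deriv (rpowGaussian b a) =ᶠ[𝓝 x]
        fun y => a * rpowGaussian b (a - 1) y - 2 * b * rpowGaussian b (a + 1) y := by
      filter_upwards [Ioi_mem_nhds hx] with y hy using deriv_rpowGaussian hy
    rw [iteratedDeriv_succ', hderiv.iteratedDeriv_eq, iteratedDeriv_fun_sub
      (contDiffAt_const.mul (contDiffAt_rpowGaussian hx.ne'))
      (contDiffAt_const.mul (contDiffAt_rpowGaussian hx.ne')),
      iteratedDeriv_const_mul_field, iteratedDeriv_const_mul_field, Nat.cast_succ,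
      add_comm (n : ℝ), ← add_assoc]
    calc x ^ (c + 1 + n) * |a * iteratedDeriv n (rpowGaussian b (a - 1)) x
            - 2 * b * iteratedDeriv n (rpowGaussian b (a + 1)) x|
        ≤ x ^ (c + 1 + n) * (|a| * |iteratedDeriv n (rpowGaussian b (a - 1)) x|
            + |2 * b| * |iteratedDeriv n (rpowGaussian b (a + 1)) x|) := by
          gcongr
          simpa only [abs_mul] using abs_sub (a * iteratedDeriv n (rpowGaussian b (a - 1)) x)
            (2 * b * iteratedDeriv n (rpowGaussian b (a + 1)) x)
      _ = |a| * (x ^ (c + 1 + n) * |iteratedDeriv n (rpowGaussian b (a - 1)) x|)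
            + |2 * b| * (x ^ (c + 1 + n) * |iteratedDeriv n (rpowGaussian b (a + 1)) x|) := by
          ring
      _ ≤ |a| * K₁ + |2 * b| * K₂ := by
          gcongr
          exacts [hK₁ x hx, hK₂ x hx]

theorem hasDerivAt_rpowGaussianTail (hb : 0 < b) (ha : -1 < a) (hx : 0 < x) :
    HasDerivAt (rpowGaussianTail b a) (-rpowGaussian b a x) x := by
  have hint := integrableOn_rpowGaussian hb ha
  have hprim : HasDerivAt (fun y => ∫ u in (0 : ℝ)..y, rpowGaussian b a u)
      (rpowGaussian b a x) x := by
    refine intervalIntegral.integral_hasDerivAt_right ?_ ?_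
      (contDiffAt_rpowGaussian (n := 0) hx.ne').continuousAt
    · rw [intervalIntegrable_iff_integrableOn_Ioc_of_le hx.le]
      exact hint.mono_set Ioc_subset_Ioi_self
    · exact ContinuousOn.stronglyMeasurableAtFilter isOpen_Ioi (fun u (hu : 0 < u) =>
        (contDiffAt_rpowGaussian (n := 0) hu.ne').continuousAt.continuousWithinAt) x hx
  refine (hprim.const_sub (∫ u in Ioi 0, rpowGaussian b a u)).congr_of_eventuallyEq ?_
  filter_upwards [Ioi_mem_nhds hx] with y hy
  rw [← intervalIntegral.integral_interval_add_Ioi hint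
    (hint.mono_set (Ioi_subset_Ioi (le_of_lt hy))), add_sub_cancel_left, rpowGaussianTail]

theorem contDiffOn_rpowGaussianTail (hb : 0 < b) (ha : -1 < a) :
    ContDiffOn ℝ ∞ (rpowGaussianTail b a) (Ioi 0) := by
  refine (contDiffOn_infty_iff_deriv_of_isOpen isOpen_Ioi).2 ⟨fun x hx =>
    (hasDerivAt_rpowGaussianTail hb ha hx).differentiableAt.differentiableWithinAt, ?_⟩
  refine ContDiffOn.congr (f := fun x => -rpowGaussian b a x) (fun x hx => ?_)
    fun x hx => (hasDerivAt_rpowGaussianTail hb ha hx).deriv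
  exact (contDiffAt_rpowGaussian (ne_of_gt hx)).neg.contDiffWithinAt

theorem abs_rpowGaussianTail_le (hb : 0 < b) (ha : -1 < a) (hx : 0 ≤ x) :
    |rpowGaussianTail b a x| ≤ rpowGaussianTail b a 0 := by
  have hnonneg : ∀ y ∈ Ioi (0 : ℝ), 0 ≤ rpowGaussian b a y := fun y hy =>
    rpowGaussian_nonneg (le_of_lt hy)
  have htail : 0 ≤ rpowGaussianTail b a x := setIntegral_nonneg measurableSet_Ioi
    fun y hy => hnonneg y (hx.trans_lt hy)
  rw [abs_of_nonneg htail]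
  exact setIntegral_mono_set (integrableOn_rpowGaussian hb ha)
    (ae_restrict_of_forall_mem measurableSet_Ioi hnonneg) (Ioi_subset_Ioi hx).eventuallyLE

end RpowGaussian

section IsInert

variable {E F : Type*} [NormedAddCommGroup E] [NormedSpace ℝ E] [NormedAddCommGroup F]
  [NormedSpace ℝ F] {f g : ℝ → E}

/-- A weight function on `(0, ∞)` is inert if it is smooth there and all `x ^ k f⁽ᵏ⁾(x)` are
bounded, so that the derivatives of its dilates `y ↦ f (X y)` are bounded on compact subsets of
`(0, ∞)` uniformly in `X > 0`. The values of `f` on `(-∞, 0]` are irrelevant. -/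
structure IsInert (f : ℝ → E) : Prop where
  contDiffOn : ContDiffOn ℝ ∞ f (Ioi 0)
  exists_bound (k : ℕ) : ∃ K, ∀ x, 0 < x → x ^ k * ‖iteratedDeriv k f x‖ ≤ K

theorem IsInert.contDiffAt {n : ℕ} (hf : IsInert f) {x : ℝ} (hx : 0 < x) :
    ContDiffAt ℝ n f x :=
  (hf.contDiffOn.contDiffAt (Ioi_mem_nhds hx)).of_le (mod_cast le_top)

theorem IsInert.congr (hf : IsInert f) (hfg : EqOn g f (Ioi 0)) : IsInert g where
  contDiffOn := hf.contDiffOn.congr hfg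
  exists_bound k := by
    obtain ⟨K, hK⟩ := hf.exists_bound k
    refine ⟨K, fun x hx => ?_⟩
    rw [(hfg.eventuallyEq_of_mem (Ioi_mem_nhds hx)).iteratedDeriv_eq]
    exact hK x hx

theorem IsInert.continuousLinearMap_comp (hf : IsInert f) (L : E →L[ℝ] F) :
    IsInert fun x => L (f x) where
  contDiffOn := L.contDiff.comp_contDiffOn hf.contDiffOn
  exists_bound k := by
    obtain ⟨K, hK⟩ := hf.exists_bound k
    refine ⟨‖L‖ * K, fun x hx => ?_⟩
    have hL : ‖iteratedDeriv k (fun x => L (f x)) x‖ ≤ ‖L‖ * ‖iteratedDeriv k f x‖ := by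
      simpa only [norm_iteratedFDeriv_eq_norm_iteratedDeriv] using!
        L.norm_iteratedFDeriv_comp_left (hf.contDiffAt hx) le_rfl
    calc x ^ k * ‖iteratedDeriv k (fun x => L (f x)) x‖
        ≤ x ^ k * (‖L‖ * ‖iteratedDeriv k f x‖) := by gcongr
      _ = ‖L‖ * (x ^ k * ‖iteratedDeriv k f x‖) := by ring
      _ ≤ ‖L‖ * K := by gcongr; exact hK x hx

theorem isInert_rpowGaussianTail {a b : ℝ} (hb : 0 < b) (ha : -1 < a) :
    IsInert (rpowGaussianTail b a) where
  contDiffOn := contDiffOn_rpowGaussianTail hb ha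
  exists_bound k := by
    cases k with
    | zero =>
      refine ⟨rpowGaussianTail b a 0, fun x hx => ?_⟩
      simpa using abs_rpowGaussianTail_le hb ha hx.le
    | succ k =>
      obtain ⟨K, hK⟩ := exists_rpow_mul_abs_iteratedDeriv_rpowGaussian_le hb k
        (show 0 ≤ 1 + a by linarith)
      refine ⟨K, fun x hx => ?_⟩
      have hderiv : deriv (rpowGaussianTail b a) =ᶠ[𝓝 x] fun y => -rpowGaussian b a y := by
        filter_upwards [Ioi_mem_nhds hx] with y hy using
          (hasDerivAt_rpowGaussianTail hb ha hy).deriv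
      rw [iteratedDeriv_succ', hderiv.iteratedDeriv_eq, iteratedDeriv_fun_neg, norm_neg,
        Real.norm_eq_abs, ← Real.rpow_natCast, Nat.cast_succ, add_comm (k : ℝ)]
      exact hK x hx

theorem iteratedDeriv_comp_mul_left (n : ℕ) (f : ℝ → E) (c x : ℝ) :
    iteratedDeriv n (fun y => f (c * y)) x = c ^ n • iteratedDeriv n f (c * x) := by
  induction n generalizing x with
  | zero => simp
  | succ n ih =>
    rw [iteratedDeriv_succ, funext ih, deriv_fun_const_smul_field,
      deriv_comp_mul_left c (iteratedDeriv n f), ← iteratedDeriv_succ, smul_smul, pow_succ]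

theorem IsInert.contDiffAt_comp_mul_left {n : ℕ} (hf : IsInert f) {X y : ℝ} (hX : 0 < X)
    (hy : 0 < y) : ContDiffAt ℝ n (fun y => f (X * y)) y :=
  (hf.contDiffAt (mul_pos hX hy)).comp y (by fun_prop)

theorem IsInert.exists_norm_iteratedDeriv_comp_mul_left_le (hf : IsInert f) (k : ℕ) :
    ∃ K, ∀ X, 0 < X → ∀ y, 0 < y →
      ‖iteratedDeriv k (fun y => f (X * y)) y‖ ≤ K * (y⁻¹) ^ k := by
  obtain ⟨K, hK⟩ := hf.exists_bound k
  refine ⟨K, fun X hX y hy => ?_⟩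
  calc ‖iteratedDeriv k (fun y => f (X * y)) y‖
      = ((X * y) ^ k * ‖iteratedDeriv k f (X * y)‖) * (y⁻¹) ^ k := by
        rw [iteratedDeriv_comp_mul_left, norm_smul, norm_pow, Real.norm_of_nonneg hX.le, mul_pow,
          inv_pow]
        field_simp
    _ ≤ K * (y⁻¹) ^ k := by
        gcongr
        exact hK _ (mul_pos hX hy)

end IsInert

section FourierDecay

variable {E : Type*} [NormedAddCommGroup E]

theorem support_iteratedDeriv_subset [NormedSpace ℝ E] (n : ℕ) (f : ℝ → E) :
    Function.support (iteratedDeriv n f) ⊆ tsupport f := fun x hx =>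
  support_iteratedFDeriv_subset (𝕜 := ℝ) n <| norm_ne_zero_iff.1 <| by
    rw [norm_iteratedFDeriv_eq_norm_iteratedDeriv]
    exact norm_ne_zero_iff.2 hx

theorem pow_mul_norm_fourier_le_integral_norm_iteratedDeriv [NormedSpace ℂ E] {n : ℕ} {f : ℝ → E}
    (hf : ContDiff ℝ n f) (hint : ∀ k ≤ n, Integrable (iteratedDeriv k f)) (ξ : ℝ) :
    (2 * Real.pi * |ξ|) ^ n * ‖𝓕 f ξ‖ ≤ ∫ y, ‖iteratedDeriv n f y‖ := by
  have hfourier : 𝓕 (iteratedDeriv n f) ξ = (2 * Real.pi * I * ξ) ^ n • 𝓕 f ξ :=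
    congrFun (Real.fourier_iteratedDeriv (N := n) (mod_cast hf)
      (fun k hk => hint k (mod_cast hk)) le_rfl) ξ
  calc (2 * Real.pi * |ξ|) ^ n * ‖𝓕 f ξ‖
      = ‖𝓕 (iteratedDeriv n f) ξ‖ := by
        rw [hfourier, norm_smul, norm_pow]
        simp [abs_of_pos Real.pi_pos]
    _ ≤ ∫ y, ‖iteratedDeriv n f y‖ :=
        VectorFourier.norm_fourierIntegral_le_integral_norm _ _ _ _ _

theorem pow_mul_norm_fourier_le_of_norm_iteratedDeriv_le [NormedSpace ℂ E] {n : ℕ} {f : ℝ → E}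
    {S : Set ℝ} {K : ℝ} (hf : ContDiff ℝ n f) (hS : IsCompact S) (hfS : tsupport f ⊆ S)
    (hK : ∀ y ∈ S, ‖iteratedDeriv n f y‖ ≤ K) (ξ : ℝ) :
    (2 * Real.pi * |ξ|) ^ n * ‖𝓕 f ξ‖ ≤ K * volume.real S := by
  have hsupp (k : ℕ) : Function.support (iteratedDeriv k f) ⊆ S :=
    (support_iteratedDeriv_subset k f).trans hfS
  have hint (k : ℕ) (hk : k ≤ n) : Integrable (iteratedDeriv k f) :=
    (hf.continuous_iteratedDeriv k (mod_cast hk)).integrable_of_hasCompactSupport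
      (.of_support_subset_isCompact hS (hsupp k))
  calc (2 * Real.pi * |ξ|) ^ n * ‖𝓕 f ξ‖
      ≤ ∫ y, ‖iteratedDeriv n f y‖ :=
        pow_mul_norm_fourier_le_integral_norm_iteratedDeriv hf hint ξ
    _ = ∫ y in S, ‖iteratedDeriv n f y‖ := by
        refine (setIntegral_eq_integral_of_forall_compl_eq_zero fun y hy => ?_).symm
        rw [Function.notMem_support.1 (mt (@hsupp n y) hy), norm_zero]
    _ ≤ K * volume.real S := by
        refine (Real.le_norm_self _).trans (norm_setIntegral_le_of_norm_le_const
          hS.measure_lt_top fun y hy => ?_)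
        simpa only [norm_norm] using hK y hy

end FourierDecay

section InertMul

variable {𝔸 : Type*} [NormedRing 𝔸] [NormedAlgebra ℝ 𝔸] {f W : ℝ → 𝔸} {n : ℕ}

theorem IsInert.contDiff_comp_mul_left_mul (hf : IsInert f) (hW : ContDiff ℝ n W)
    (hW0 : tsupport W ⊆ Ioi 0) {X : ℝ} (hX : 0 < X) :
    ContDiff ℝ n fun y => f (X * y) * W y := by
  refine contDiff_iff_contDiffAt.2 fun y => ?_
  by_cases hy : y ∈ tsupport W
  · exact (hf.contDiffAt_comp_mul_left hX (hW0 hy)).mul hW.contDiffAt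
  · refine (contDiffAt_const (c := 0)).congr_of_eventuallyEq ?_
    filter_upwards [notMem_tsupport_iff_eventuallyEq.1 hy] with z hz
    simp [hz]

theorem IsInert.exists_norm_iteratedDeriv_comp_mul_left_mul_le (hf : IsInert f)
    (hW : ContDiff ℝ n W) (hWc : HasCompactSupport W) (hW0 : tsupport W ⊆ Ioi 0) :
    ∃ K, ∀ X, 0 < X → ∀ y ∈ tsupport W, ‖iteratedDeriv n (fun y => f (X * y) * W y) y‖ ≤ K := by
  choose A hA using hf.exists_norm_iteratedDeriv_comp_mul_left_le
  have hcont : ContinuousOn (fun y => ∑ k ∈ Finset.range (n + 1),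
      ‖(n.choose k : 𝔸)‖ * (A k * (y⁻¹) ^ k) * ‖iteratedDeriv (n - k) W y‖) (tsupport W) := by
    have hinv : ContinuousOn (fun y : ℝ => y⁻¹) (tsupport W) :=
      continuousOn_inv₀.mono fun y hy => ne_of_gt (hW0 hy)
    refine continuousOn_finsetSum _ fun k _ => ?_
    have hWk : Continuous (iteratedDeriv (n - k) W) :=
      hW.continuous_iteratedDeriv _ (mod_cast Nat.sub_le n k)
    fun_prop
  obtain ⟨K, hK⟩ := hWc.isCompact.exists_bound_of_continuousOn hcont
  refine ⟨K, fun X hX y hy => le_trans ?_ ((Real.le_norm_self _).trans (hK y hy))⟩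
  have hy0 : 0 < y := hW0 hy
  rw [iteratedDeriv_fun_mul (hf.contDiffAt_comp_mul_left hX hy0) hW.contDiffAt]
  refine norm_sum_le_of_le _ fun k _ => ?_
  calc ‖n.choose k * iteratedDeriv k (fun y => f (X * y)) y * iteratedDeriv (n - k) W y‖
      ≤ ‖(n.choose k : 𝔸)‖ * ‖iteratedDeriv k (fun y => f (X * y)) y‖ *
          ‖iteratedDeriv (n - k) W y‖ := norm_mul₃_le
    _ ≤ ‖(n.choose k : 𝔸)‖ * (A k * (y⁻¹) ^ k) * ‖iteratedDeriv (n - k) W y‖ := by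
        gcongr
        exact hA k X hX y hy0

end InertMul

theorem IsInert.exists_pow_mul_norm_fourier_le {f W : ℝ → ℂ} {n : ℕ} (hf : IsInert f)
    (hW : ContDiff ℝ n W) (hWc : HasCompactSupport W) (hW0 : tsupport W ⊆ Ioi 0) :
    ∃ K, ∀ X, 0 < X → ∀ ξ : ℝ, (2 * Real.pi * |ξ|) ^ n * ‖𝓕 (fun y => f (X * y) * W y) ξ‖ ≤ K := by
  obtain ⟨K, hK⟩ := hf.exists_norm_iteratedDeriv_comp_mul_left_mul_le hW hWc hW0
  exact ⟨K * volume.real (tsupport W), fun X hX =>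
    pow_mul_norm_fourier_le_of_norm_iteratedDeriv_le (hf.contDiff_comp_mul_left_mul hW hW0 hX)
      hWc.isCompact tsupport_mul_subset_right (hK X hX)⟩

section MellinIntegral

variable {E : Type*} [NormedAddCommGroup E] [NormedSpace ℂ E] {f : ℝ → E} {s : ℂ}

theorem integrableOn_Ioo_cpow_sub_one (hs : 0 < s.re) (u : ℝ) :
    IntegrableOn (fun x : ℝ => (x : ℂ) ^ (s - 1)) (Ioo 0 u) := by
  rcases le_or_gt u 0 with hu | hu
  · simp [Ioo_eq_empty_of_le hu]
  · exact (intervalIntegral.integrableOn_Ioo_cpow_iff hu).2 (by simpa using hs)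

theorem setIntegral_Ioo_cpow_sub_one (hs : 0 < s.re) {u : ℝ} (hu : 0 < u) :
    ∫ x in Ioo 0 u, (x : ℂ) ^ (s - 1) = s⁻¹ * (u : ℂ) ^ s := by
  have hs0 : s ≠ 0 := ne_zero_of_re_pos hs
  rw [← integral_Ioc_eq_integral_Ioo, ← intervalIntegral.integral_of_le hu.le,
    integral_cpow (Or.inl (by simpa using hs)), ofReal_zero, sub_add_cancel, zero_cpow hs0,
    sub_zero, div_eq_inv_mul]

theorem setIntegral_Ioo_norm_cpow_sub_one (hs : 0 < s.re) {u : ℝ} (hu : 0 < u) :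
    ∫ x in Ioo 0 u, ‖(x : ℂ) ^ (s - 1)‖ = s.re⁻¹ * ‖(u : ℂ) ^ s‖ := by
  calc ∫ x in Ioo 0 u, ‖(x : ℂ) ^ (s - 1)‖
      = ∫ x in Ioo 0 u, x ^ (s.re - 1) :=
        setIntegral_congr_fun measurableSet_Ioo fun x hx => by
          simp [norm_cpow_eq_rpow_re_of_pos hx.1]
    _ = s.re⁻¹ * ‖(u : ℂ) ^ s‖ := by
        rw [← integral_Ioc_eq_integral_Ioo, ← intervalIntegral.integral_of_le hu.le,
          integral_rpow (Or.inl (by linarith)), sub_add_cancel, Real.zero_rpow hs.ne', sub_zero,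
          norm_cpow_eq_rpow_re_of_pos hu, div_eq_inv_mul]

theorem aestronglyMeasurable_of_mellinConvergent (hf : MellinConvergent f s) :
    AEStronglyMeasurable f (volume.restrict (Ioi 0)) := by
  have hpow : Measurable fun u : ℝ => (u : ℂ) ^ (-(s - 1)) := by fun_prop
  refine (hpow.aestronglyMeasurable.smul hf.aestronglyMeasurable).congr ?_
  filter_upwards [ae_restrict_mem measurableSet_Ioi] with u hu
  have hu0 : (u : ℂ) ≠ 0 := ofReal_ne_zero.2 (ne_of_gt hu)
  simp [smul_smul, ← cpow_add _ _ hu0]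

theorem integrable_prod_indicator_cpow_smul (hs : 0 < s.re) (hf : MellinConvergent f (s + 1)) :
    Integrable (fun p : ℝ × ℝ => (Iio p.2).indicator (fun x : ℝ => (x : ℂ) ^ (s - 1)) p.1 • f p.2)
      ((volume.restrict (Ioi 0)).prod (volume.restrict (Ioi 0))) := by
  have hind : Measurable fun p : ℝ × ℝ =>
      (Iio p.2).indicator (fun x : ℝ => (x : ℂ) ^ (s - 1)) p.1 :=
    Measurable.ite (measurableSet_lt measurable_fst measurable_snd) (by fun_prop) measurable_const
  have hmeas : AEStronglyMeasurable
      (fun p : ℝ × ℝ => (Iio p.2).indicator (fun x : ℝ => (x : ℂ) ^ (s - 1)) p.1 • f p.2)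
      ((volume.restrict (Ioi 0)).prod (volume.restrict (Ioi 0))) :=
    hind.aestronglyMeasurable.smul (aestronglyMeasurable_of_mellinConvergent hf).comp_snd
  refine (integrable_prod_iff' hmeas).2 ⟨.of_forall fun u => ?_, ?_⟩
  · refine Integrable.smul_const ?_ (f u)
    rw [integrable_indicator_iff measurableSet_Iio, IntegrableOn,
      Measure.restrict_restrict measurableSet_Iio, Iio_inter_Ioi]
    exact integrableOn_Ioo_cpow_sub_one hs u
  · refine (hf.norm.const_mul s.re⁻¹).congr ?_
    filter_upwards [ae_restrict_mem measurableSet_Ioi] with u hu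
    simp only [norm_smul, norm_indicator_eq_indicator_norm, integral_mul_const]
    rw [setIntegral_indicator measurableSet_Iio, Ioi_inter_Iio,
      setIntegral_Ioo_norm_cpow_sub_one hs hu, add_sub_cancel_right, mul_assoc]

theorem hasMellin_integral_Ioi [CompleteSpace E] (hs : 0 < s.re) (hf : MellinConvergent f (s + 1)) :
    HasMellin (fun x => ∫ u in Ioi x, f u) s (s⁻¹ • mellin f (s + 1)) := by
  have hint := integrable_prod_indicator_cpow_smul hs hf
  have hinner : ∀ x ∈ Ioi (0 : ℝ),
      ∫ u in Ioi 0, (Iio u).indicator (fun x : ℝ => (x : ℂ) ^ (s - 1)) x • f u =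
        (x : ℂ) ^ (s - 1) • ∫ u in Ioi x, f u := fun x (hx : 0 < x) => by
    have hind (u : ℝ) : (Iio u).indicator (fun x : ℝ => (x : ℂ) ^ (s - 1)) x • f u =
        (x : ℂ) ^ (s - 1) • (Ioi x).indicator f u := by
      by_cases hxu : x < u <;> simp [hxu]
    simp only [hind, integral_smul]
    rw [setIntegral_indicator measurableSet_Ioi, Ioi_inter_Ioi, max_eq_right hx.le]
  have houter : ∀ u ∈ Ioi (0 : ℝ),
      ∫ x in Ioi 0, (Iio u).indicator (fun x : ℝ => (x : ℂ) ^ (s - 1)) x • f u =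
        s⁻¹ • (u : ℂ) ^ (s + 1 - 1) • f u := fun u hu => by
    rw [integral_smul_const, setIntegral_indicator measurableSet_Iio, Ioi_inter_Iio,
      setIntegral_Ioo_cpow_sub_one hs hu, add_sub_cancel_right, mul_smul]
  constructor
  · exact hint.integral_prod_left.congr (ae_restrict_of_forall_mem measurableSet_Ioi hinner)
  · rw [mellin, ← setIntegral_congr_fun measurableSet_Ioi hinner, integral_integral_swap hint,
      setIntegral_congr_fun measurableSet_Ioi houter, integral_smul, mellin]

end MellinIntegral

section Gamma

theorem norm_Gamma_le_Gamma_re {z : ℂ} (hz : 0 < z.re) : ‖Gamma z‖ ≤ Real.Gamma z.re := by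
  rw [Gamma_eq_integral hz, Real.Gamma_eq_integral hz, GammaIntegral]
  refine (norm_integral_le_integral_norm _).trans_eq
    (setIntegral_congr_fun measurableSet_Ioi fun x hx => ?_)
  rw [norm_mul, norm_cpow_eq_rpow_re_of_pos hx, norm_real,
    Real.norm_of_nonneg (Real.exp_pos _).le, sub_re, one_re]

theorem norm_mul_norm_Gamma_le {z : ℂ} (hz : 0 < z.re) :
    ‖z‖ * ‖Gamma z‖ ≤ Real.Gamma (z.re + 1) := by
  rw [← norm_mul, ← Gamma_add_one z (ne_zero_of_re_pos hz)]
  exact norm_Gamma_le_Gamma_re (z := z + 1) (by simpa using by linarith)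

theorem continuousOn_Gamma : ContinuousOn Gamma {z | 0 < z.re} := fun z (hz : 0 < z.re) =>
  (differentiableAt_Gamma z fun m hm => by
    rw [hm, neg_re, natCast_re] at hz
    linarith [m.cast_nonneg (α := ℝ)]).continuousAt.continuousWithinAt

theorem hasMellin_exp_neg {s : ℂ} (hs : 0 < s.re) :
    HasMellin (fun x : ℝ => (Real.exp (-x) : ℂ)) s (Gamma s) := by
  refine ⟨?_, by rw [Gamma_eq_integral hs, GammaIntegral_eq_mellin]⟩
  simpa only [MellinConvergent, smul_eq_mul, mul_comm] using GammaIntegral_convergent hs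

theorem hasMellin_congr {E : Type*} [NormedAddCommGroup E] [NormedSpace ℂ E] {f g : ℝ → E} {s : ℂ}
    {m : E} (hfg : EqOn f g (Ioi 0)) : HasMellin f s m ↔ HasMellin g s m := by
  have hker : EqOn (fun x : ℝ => (x : ℂ) ^ (s - 1) • f x) (fun x : ℝ => (x : ℂ) ^ (s - 1) • g x)
      (Ioi 0) := fun x hx => congrArg _ (hfg hx)
  simp only [HasMellin, MellinConvergent, mellin, integrableOn_congr_fun hker measurableSet_Ioi,
    setIntegral_congr_fun measurableSet_Ioi hker]

variable {a b : ℝ} {s : ℂ}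

theorem hasMellin_rpowGaussian (hb : 0 < b) (hs : 0 < (s + a).re) :
    HasMellin (fun x => (rpowGaussian b a x : ℂ)) s
      (1 / 2 * (b ^ (-((s + a) / 2)) * Gamma ((s + a) / 2))) := by
  have hexp : HasMellin (fun x : ℝ => (Real.exp (-x) : ℂ)) ((s + a) / (2 : ℝ)) _ :=
    hasMellin_exp_neg (by rw [div_ofReal_re]; positivity)
  have heq : EqOn (fun x => (rpowGaussian b a x : ℂ))
      (fun x : ℝ => (x : ℂ) ^ (a : ℂ) • (Real.exp (-(b * x ^ (2 : ℝ))) : ℂ)) (Ioi 0) :=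
    fun x hx => by simp [rpowGaussian, ofReal_cpow (le_of_lt hx)]
  rw [hasMellin_congr heq]
  constructor
  · exact MellinConvergent.cpow_smul.2 <|
      (MellinConvergent.comp_rpow (f := fun x => (Real.exp (-(b * x)) : ℂ)) two_ne_zero).2 <|
      (MellinConvergent.comp_mul_left (f := fun x => (Real.exp (-x) : ℂ)) hb).2 hexp.1
  · rw [mellin_cpow_smul, mellin_comp_rpow (fun x => (Real.exp (-(b * x)) : ℂ)),
      mellin_comp_mul_left (fun x => (Real.exp (-x) : ℂ)) _ hb, hexp.2]
    simp

theorem hasMellin_rpowGaussianTail (hb : 0 < b) (ha : -1 < a) (hs : 0 < s.re) :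
    HasMellin (fun x => (rpowGaussianTail b a x : ℂ)) s
      (s⁻¹ * (1 / 2 * (b ^ (-((s + 1 + a) / 2)) * Gamma ((s + 1 + a) / 2)))) := by
  have hg := hasMellin_rpowGaussian (s := s + 1) (a := a) hb (by
    simp only [add_re, one_re, ofReal_re]
    linarith)
  simpa only [hg.2, rpowGaussianTail, integral_complex_ofReal, smul_eq_mul] using
    hasMellin_integral_Ioi hs hg.1

theorem norm_le_norm_add_ofReal {r : ℝ} (hs : 0 ≤ s.re) (hr : 0 ≤ r) : ‖s‖ ≤ ‖s + r‖ := by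
  rw [norm_def, norm_def]
  refine Real.sqrt_le_sqrt ?_
  simp only [normSq_apply, add_re, add_im, ofReal_re, ofReal_im, add_zero]
  nlinarith

-- The factor `s⁻¹` and the Gamma factor contribute one power of `‖s‖⁻¹` each.
theorem norm_mellin_rpowGaussianTail_le (hb : 0 < b) (ha : -1 < a) (hs : 0 < s.re) :
    ‖mellin (fun x => (rpowGaussianTail b a x : ℂ)) s‖ ≤
      b ^ (-((s.re + 1 + a) / 2)) * Real.Gamma ((s.re + 1 + a) / 2 + 1) * (‖s‖ ^ 2)⁻¹ := by
  have hs0 : 0 < ‖s‖ := norm_pos_iff.2 (ne_zero_of_re_pos hs)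
  have hzre : ((s + 1 + a) / 2).re = (s.re + 1 + a) / 2 := by simp
  have hz : 0 < ((s + 1 + a) / 2).re := by linarith
  have hsz : ‖s‖ ≤ 2 * ‖(s + 1 + a) / 2‖ := by
    rw [norm_div, Complex.norm_two, mul_div_cancel₀ _ (two_ne_zero' ℝ), add_assoc, ← ofReal_one,
      ← ofReal_add]
    exact norm_le_norm_add_ofReal hs.le (by linarith)
  have hGamma : ‖Gamma ((s + 1 + a) / 2)‖ ≤ Real.Gamma ((s.re + 1 + a) / 2 + 1) * (2 * ‖s‖⁻¹) := by
    rw [← div_eq_mul_inv, ← mul_div_assoc, le_div_iff₀ hs0]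
    calc ‖Gamma ((s + 1 + a) / 2)‖ * ‖s‖
        ≤ ‖Gamma ((s + 1 + a) / 2)‖ * (2 * ‖(s + 1 + a) / 2‖) := by gcongr
      _ = ‖(s + 1 + a) / 2‖ * ‖Gamma ((s + 1 + a) / 2)‖ * 2 := by ring
      _ ≤ Real.Gamma ((s.re + 1 + a) / 2 + 1) * 2 := by
          gcongr
          exact hzre ▸ norm_mul_norm_Gamma_le hz
  rw [(hasMellin_rpowGaussianTail hb ha hs).2, norm_mul, norm_mul, norm_mul, norm_inv,
    norm_cpow_eq_rpow_re_of_pos hb, neg_re, hzre]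
  calc ‖s‖⁻¹ * (‖(1 / 2 : ℂ)‖ * (b ^ (-((s.re + 1 + a) / 2)) * ‖Gamma ((s + 1 + a) / 2)‖))
      ≤ ‖s‖⁻¹ * (‖(1 / 2 : ℂ)‖ * (b ^ (-((s.re + 1 + a) / 2)) *
          (Real.Gamma ((s.re + 1 + a) / 2 + 1) * (2 * ‖s‖⁻¹)))) := by gcongr
    _ = b ^ (-((s.re + 1 + a) / 2)) * Real.Gamma ((s.re + 1 + a) / 2 + 1) * (‖s‖ ^ 2)⁻¹ := by
        rw [norm_div, norm_one, Complex.norm_two]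
        ring

theorem integrable_inv_sq_norm_vertical {σ : ℝ} (hσ : 0 < σ) :
    Integrable fun t : ℝ => (‖(σ : ℂ) + t * I‖ ^ 2)⁻¹ := by
  refine ((integrable_inv_one_add_sq.comp_div hσ.ne').const_mul (σ ^ 2)⁻¹).congr
    (.of_forall fun t => ?_)
  dsimp only
  rw [Complex.sq_norm, normSq_add_mul_I, ← mul_inv]
  congr 1
  field_simp

theorem verticalIntegrable_mellin_rpowGaussianTail (hb : 0 < b) (ha : -1 < a) {σ : ℝ} (hσ : 0 < σ) :
    VerticalIntegrable (mellin fun x => (rpowGaussianTail b a x : ℂ)) σ := by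
  have hre (t : ℝ) : ((σ : ℂ) + t * I).re = σ := by simp
  have hpos (t : ℝ) : 0 < ((σ : ℂ) + t * I).re := by rwa [hre]
  refine ((integrable_inv_sq_norm_vertical hσ).const_mul
    (b ^ (-((σ + 1 + a) / 2)) * Real.Gamma ((σ + 1 + a) / 2 + 1))).mono' ?_ (.of_forall fun t => ?_)
  · simp only [(hasMellin_rpowGaussianTail hb ha (hpos _)).2]
    have hb0 : (b : ℂ) ≠ 0 := ofReal_ne_zero.2 hb.ne'
    have hs0 (t : ℝ) : (σ : ℂ) + t * I ≠ 0 := ne_zero_of_re_pos (hpos t)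
    have hGamma : Continuous fun t : ℝ => Gamma (((σ : ℂ) + t * I + 1 + a) / 2) :=
      continuousOn_Gamma.comp_continuous (by fun_prop) fun t => by
        simpa using by linarith
    refine Continuous.aestronglyMeasurable ?_
    exact (Continuous.inv₀ (by fun_prop) hs0).mul (continuous_const.mul
      ((Continuous.const_cpow (by fun_prop) (Or.inl hb0)).mul hGamma))
  · simpa only [hre] using norm_mellin_rpowGaussianTail_le hb ha (hpos t)

end Gamma

section V₁

-- The exponent on the right is the one in the Mellin transform of the tail at `a = -1 / 2`.
theorem sqrt_pi_cpow_neg (s : ℂ) :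
    ((Real.sqrt Real.pi : ℝ) : ℂ) ^ (-s) =
      ((Real.pi ^ (1 / 4 : ℝ) : ℝ) : ℂ) * (Real.pi : ℂ) ^ (-((s + 1 + (-1 / 2 : ℝ)) / 2)) := by
  rw [Real.sqrt_eq_rpow, ← cpow_mul_ofReal_nonneg Real.pi_pos.le, ofReal_cpow Real.pi_pos.le,
    ← cpow_add _ _ (ofReal_ne_zero.2 Real.pi_ne_zero)]
  congr 1
  push_cast
  ring

theorem V₁_integrand_eq {x : ℝ} (hx : 0 < x) {s : ℂ} (hs : 0 < s.re) :
    ((Real.sqrt Real.pi * x : ℝ) : ℂ) ^ (-s) * (Gamma ((2 * s + 1) / 4) / Gamma (1 / 4)) * s⁻¹ =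
      ((2 * Real.pi ^ (1 / 4 : ℝ) / Real.Gamma (1 / 4) : ℝ) : ℂ) *
        ((x : ℂ) ^ (-s) * mellin (fun y => (rpowGaussianTail Real.pi (-1 / 2) y : ℂ)) s) := by
  have harg : (2 * s + 1) / 4 = (s + 1 + (-1 / 2 : ℝ)) / 2 := by
    push_cast
    ring
  have hGamma : Gamma (1 / 4) = (Real.Gamma (1 / 4) : ℂ) := by
    rw [← Gamma_ofReal]
    norm_num
  rw [(hasMellin_rpowGaussianTail Real.pi_pos (by norm_num) hs).2, ofReal_mul,
    mul_cpow_ofReal_nonneg (Real.sqrt_nonneg _) hx.le, sqrt_pi_cpow_neg, harg, hGamma]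
  simp only [ofReal_div, ofReal_mul, ofReal_ofNat]
  ring

theorem V₁_eq_rpowGaussianTail {x : ℝ} (hx : 0 < x) :
    V₁ x = ((2 * Real.pi ^ (1 / 4 : ℝ) / Real.Gamma (1 / 4) : ℝ) : ℂ) *
      rpowGaussianTail Real.pi (-1 / 2) x := by
  have ha : (-1 : ℝ) < -1 / 2 := by norm_num
  have hinv := mellinInv_mellin_eq 1 (fun y => (rpowGaussianTail Real.pi (-1 / 2) y : ℂ)) hx
    (hasMellin_rpowGaussianTail Real.pi_pos ha (by simp)).1
    (verticalIntegrable_mellin_rpowGaussianTail Real.pi_pos ha one_pos)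
    (hasDerivAt_rpowGaussianTail Real.pi_pos ha hx).ofReal_comp.continuousAt
  rw [← hinv, mellinInv, V₁, real_smul, mul_left_comm, ofReal_one]
  congr 1
  · push_cast
    rfl
  · rw [← integral_const_mul]
    exact integral_congr_ae (.of_forall fun t => V₁_integrand_eq hx (by simp))

theorem isInert_V₁ : IsInert V₁ := by
  have htail : IsInert (rpowGaussianTail Real.pi (-1 / 2)) :=
    isInert_rpowGaussianTail Real.pi_pos (by norm_num)
  refine (htail.continuousLinearMap_comp (ContinuousLinearMap.toSpanSingleton ℝ
    ((2 * Real.pi ^ (1 / 4 : ℝ) / Real.Gamma (1 / 4) : ℝ) : ℂ))).congr fun x hx => ?_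
  simp only [V₁_eq_rpowGaussianTail hx, ContinuousLinearMap.toSpanSingleton_apply, real_smul,
    mul_comm]

end V₁

theorem stmt11_general {W : ℝ → ℂ} {S : Set ℝ} {B : ℕ} (hW : ContDiff ℝ B W) (hS : IsCompact S)
    (hS0 : S ⊆ Ioi 0) (hsupp : Function.support W ⊆ S) :
    ∃ C > 0, ∀ q : ℝ, 0 < q → ∀ M : ℝ, 0 < M → ∀ m : ℝ, m ≠ 0 →
      ‖∫ y : ℝ, V₁ (y * M / Real.sqrt q) * W y *
          Complex.exp (2 * Real.pi * I * (-(m * M * y) / q))‖ ≤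
        C * (q / (|m| * M)) ^ B := by
  obtain ⟨K, hK⟩ := isInert_V₁.exists_pow_mul_norm_fourier_le hW
    (.of_support_subset_isCompact hS hsupp) ((closure_minimal hsupp hS.isClosed).trans hS0)
  refine ⟨max K 1, by positivity, fun q hq M hM m hm => ?_⟩
  have hX : 0 < M / Real.sqrt q := by positivity
  have hfourier : ∫ y : ℝ, V₁ (y * M / Real.sqrt q) * W y *
      Complex.exp (2 * Real.pi * I * (-(m * M * y) / q)) =
        𝓕 (fun y => V₁ (M / Real.sqrt q * y) * W y) (m * M / q) := by
    rw [Real.fourier_real_eq_integral_exp_smul]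
    congr 1 with y
    rw [smul_eq_mul, mul_comm, mul_div_assoc, mul_comm y]
    congr 2
    push_cast
    ring
  have hξ : (q / (|m| * M)) ^ B = (|m * M / q| ^ B)⁻¹ := by
    rw [abs_div, abs_mul, abs_of_pos hM, abs_of_pos hq, ← inv_pow, inv_div]
  rw [hfourier, hξ, ← div_eq_mul_inv, le_div_iff₀' (by positivity)]
  refine le_trans ?_ ((hK _ hX (m * M / q)).trans (le_max_left K 1))
  gcongr
  exact le_mul_of_one_le_left (abs_nonneg _) (by linarith [Real.pi_gt_three])

/-- **Rapid decay of the Fourier-type integral arising from Poisson summation.** Let `W` be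
a smooth function supported in `[1, 2]`. For every `B ∈ ℕ` and `δ > 0` there is `C > 0`
such that for every prime `q`, every real `1 ≤ M ≤ q^{1/2+δ}` and every nonzero integer
`m`, `|∫ V₁(yM/√q) W(y) e(-mMy/q) dy| ≤ C (q^{1+δ}/(|m| M))^B`. -/
theorem stmt11 (W : ℝ → ℂ) (hW : ContDiff ℝ (⊤ : ℕ∞) W)
    (hsupp : Function.support W ⊆ Set.Icc 1 2) (B : ℕ) (δ : ℝ) (hδ : 0 < δ) :
    ∃ C > 0, ∀ q : ℕ, q.Prime → ∀ M : ℝ, 1 ≤ M → M ≤ (q : ℝ) ^ (1 / 2 + δ) →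
      ∀ m : ℤ, m ≠ 0 →
        ‖∫ y : ℝ, V₁ (y * M / Real.sqrt q) * W y *
            Complex.exp (2 * Real.pi * I * (-(m * M * y) / q))‖ ≤
          C * ((q : ℝ) ^ (1 + δ) / (|(m : ℝ)| * M)) ^ B := by
  obtain ⟨C, hC, h⟩ := stmt11_general (hW.of_le (mod_cast le_top)) isCompact_Icc
    (fun y hy => one_pos.trans_le hy.1) hsupp
  refine ⟨C, hC, fun q hq M hM _ m hm => ?_⟩
  have hbound := h q (mod_cast hq.pos) M (one_pos.trans_le hM) m (mod_cast hm)
  rw [ofReal_intCast, ofReal_natCast] at hbound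
  refine hbound.trans ?_
  gcongr
  exact Real.self_le_rpow_of_one_le (mod_cast hq.one_le) (by linarith)
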